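/- Let x, y be probability vectors of dimension d with strictly positive entries. Then the following are equivalent: (i) for every ε > 0 there exists a probability vector x_ε of dimension d with ‖x − x_ε‖₁ ≤ ε and a probability vector c (of some finite dimension) such that x_ε⊗c ≺ y⊗c; (ii) H_α(x) ≥ H_α(y) for every real number α, where H_α(v) = (sgn(α)/(1−α)) ln Σ_i v_i^α for α ∉ {0,1}, H_1(v) = −Σ_i v_i ln v_i, and H_0(v) = ln |{i : v_i > 0}|. -/

import Mathlib

/-- The sum of the `k` largest entries of a vector (equivalently, for vectors with
nonnegative entries, the maximum of `∑ i ∈ s, x i` over subsets `s` of cardinality at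
most `k`; this also accounts for padding with zeros). -/
noncomputable def topSum {ι : Type*} [Fintype ι] [DecidableEq ι] (x : ι → ℝ) (k : ℕ) : ℝ :=
  ((Finset.univ : Finset ι).powerset.filter (fun s => s.card ≤ k)).sup'
    ⟨∅, by simp⟩ (fun s => ∑ i ∈ s, x i)

/-- A probability vector: nonnegative entries summing to 1. -/
def IsProbVec {ι : Type*} [Fintype ι] (x : ι → ℝ) : Prop :=
  (∀ i, 0 ≤ x i) ∧ ∑ i, x i = 1

/-- `x ≺ y` (majorization, after padding with zeros to a common dimension): every partial
sum of the `k` largest entries of `x` is at most that of `y`, with equal total sums. -/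
def PMaj {ι κ : Type*} [Fintype ι] [DecidableEq ι] [Fintype κ] [DecidableEq κ]
    (x : ι → ℝ) (y : κ → ℝ) : Prop :=
  (∀ k : ℕ, topSum x k ≤ topSum y k) ∧ (∑ i, x i = ∑ j, y j)

/-- Tensor product of two vectors: `(x ⊗ y)_{(i,j)} = x_i y_j`. -/
def pvTensor {ι κ : Type*} (x : ι → ℝ) (y : κ → ℝ) : ι × κ → ℝ :=
  fun p => x p.1 * y p.2

/-- The Rényi entropies `H_α`. -/
noncomputable def renyiH {ι : Type*} [Fintype ι] [DecidableEq ι] (α : ℝ) (v : ι → ℝ) : ℝ :=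
  if α = 0 then Real.log ((Finset.univ.filter (fun i => 0 < v i)).card)
  else if α = 1 then - ∑ i, v i * Real.log (v i)
  else (Real.sign α / (1 - α)) * Real.log (∑ i, v i ^ α)

/-!
On the logarithmic scale, a majorization `x ⊗ c ≺ y ⊗ c` between nonnegative vectors of equal mass
says that `∑ j, G (u - log (c j)) ≥ 0` for all `u`, where `G` is the difference of the hinge sums
`∑ i, max (v i / exp u - 1) 0` of `v = y` and `v = x`. The Laplace transform of `G` at `α` is
`∑ i, φ_α (y i) - ∑ i, φ_α (x i)` with `φ_α'' v = v ^ (α - 2)`, so its nonnegativity for all `α` is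
the monotonicity of the Rényi entropies. A sum of translates multiplies the transform by
`∑ j, c j ^ α > 0`, hence nonnegativity of the transform is necessary.

Conversely, mixing a nonuniform `x` with a little of the uniform vector makes the transform
positive for every `α`, and `G` positive near both ends of its support. Sampling `G` with a small
step then gives polynomials that are positive on `(0, ∞)`, and by Poincaré and Pólya their products
with a high power of `1 + X` have nonnegative coefficients: a binomial distribution on a geometric
progression is a catalyst.
-/

open Polynomial Filter Topology Set

section Polya

theorem descFactorial_mul_coeff_one_add_X_pow_mul_X_pow {R : Type*} [CommSemiring R]
    {i j N k m : ℕ} (h : k + m = N + (i + j)) :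
    ((k + m).descFactorial (i + j) : R) * ((1 + X) ^ N * X ^ i : R[X]).coeff k =
      (k + m).choose k * (k.descFactorial i * m.descFactorial j) := by
  rw [coeff_mul_X_pow', coeff_one_add_X_pow]
  split_ifs with hik
  · obtain ⟨r, rfl⟩ := Nat.exists_eq_add_of_le' hik
    rcases lt_or_ge N r with hr | hr
    · simp [Nat.choose_eq_zero_of_lt hr, Nat.descFactorial_of_lt (show m < j by omega)]
    obtain ⟨s, rfl⟩ := Nat.exists_eq_add_of_le hr
    obtain rfl : m = s + j := by omega
    norm_cast
    refine congrArg (Nat.cast : ℕ → R) ?_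
    rw [Nat.add_sub_cancel]
    refine Nat.eq_of_mul_eq_mul_left (mul_pos r.factorial_pos s.factorial_pos) ?_
    have hk := Nat.factorial_mul_descFactorial (Nat.le_add_left i r)
    have hm := Nat.factorial_mul_descFactorial (Nat.le_add_left j s)
    have htotal := Nat.factorial_mul_descFactorial (show i + j ≤ r + i + (s + j) by omega)
    rw [Nat.add_sub_cancel] at hk hm
    rw [show r + i + (s + j) - (i + j) = r + s by omega] at htotal
    calc r.factorial * s.factorial * ((r + i + (s + j)).descFactorial (i + j) * (r + s).choose r)
        = ((r + s).choose r * r.factorial * s.factorial) *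
            (r + i + (s + j)).descFactorial (i + j) := by ring
      _ = (r + i + (s + j)).choose (r + i) * (r + i).factorial * (s + j).factorial := by
          rw [Nat.choose_symm_add, Nat.add_choose_mul_factorial_mul_factorial, htotal,
            Nat.choose_symm_add, Nat.add_choose_mul_factorial_mul_factorial]
      _ = _ := by rw [← hk, ← hm]; ring
  · simp [Nat.descFactorial_of_lt (not_le.mp hik)]

/-- The homogenisation of `p` in the two variables `s` and `t`, with powers replaced by falling
factorials of step `h`. It interpolates between the values of `p` on the positive half-line
(`h = 0`) and, up to positive factors, the coefficients of `(1 + X) ^ N * p` (`h = 1`). -/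
noncomputable def fallingForm (p : ℝ[X]) (h s t : ℝ) : ℝ :=
  ∑ i ∈ Finset.range (p.natDegree + 1), p.coeff i *
    ((∏ l ∈ Finset.range i, (s - l * h)) * ∏ l ∈ Finset.range (p.natDegree - i), (t - l * h))

theorem fallingForm_mul (p : ℝ[X]) (c h s t : ℝ) :
    fallingForm p (c * h) (c * s) (c * t) = c ^ p.natDegree * fallingForm p h s t := by
  have hprod (n : ℕ) (r : ℝ) : ∏ l ∈ Finset.range n, (c * r - l * (c * h)) =
      c ^ n * ∏ l ∈ Finset.range n, (r - l * h) := by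
    simp_rw [mul_left_comm _ c, ← mul_sub, Finset.prod_mul_distrib, Finset.prod_const,
      Finset.card_range]
  simp only [fallingForm, hprod, Finset.mul_sum]
  refine Finset.sum_congr rfl fun i hi => ?_
  rw [← Nat.add_sub_of_le (Finset.mem_range_succ_iff.mp hi), Nat.add_sub_cancel_left, pow_add]
  ring

theorem descFactorial_mul_coeff_one_add_X_pow_mul (p : ℝ[X]) {N k m : ℕ}
    (h : k + m = N + p.natDegree) :
    ((k + m).descFactorial p.natDegree : ℝ) * ((1 + X) ^ N * p).coeff k =
      (k + m).choose k * fallingForm p 1 k m := by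
  have hprod (n i : ℕ) : ∏ l ∈ Finset.range i, ((n : ℝ) - l * 1) = n.descFactorial i := by
    simp_rw [mul_one]
    rw [← descPochhammer_eval_eq_prod_range, descPochhammer_eval_eq_descFactorial]
  have hexpand : (1 + X) ^ N * p =
      ∑ i ∈ Finset.range (p.natDegree + 1), C (p.coeff i) * ((1 + X) ^ N * X ^ i) := by
    conv_lhs => rw [p.as_sum_range_C_mul_X_pow, Finset.mul_sum]
    exact Finset.sum_congr rfl fun i _ => mul_left_comm _ _ _
  rw [hexpand, finsetSum_coeff, fallingForm, Finset.mul_sum, Finset.mul_sum]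
  refine Finset.sum_congr rfl fun i hi => ?_
  obtain ⟨j, hj⟩ := Nat.exists_eq_add_of_le (Finset.mem_range_succ_iff.mp hi)
  rw [coeff_C_mul, hprod, hprod, hj, Nat.add_sub_cancel_left, mul_left_comm,
    descFactorial_mul_coeff_one_add_X_pow_mul_X_pow (hj ▸ h), mul_left_comm]

theorem fallingForm_zero_pos {p : ℝ[X]} (hp : ∀ z, 0 ≤ z → 0 < p.eval z)
    (hlead : 0 < p.leadingCoeff) {t : ℝ} (ht : t ∈ Icc (0 : ℝ) 1) :
    0 < fallingForm p 0 t (1 - t) := by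
  have hform : fallingForm p 0 t (1 - t) =
      ∑ i ∈ Finset.range (p.natDegree + 1), p.coeff i * (t ^ i * (1 - t) ^ (p.natDegree - i)) := by
    simp [fallingForm]
  rw [hform]
  rcases ht.2.eq_or_lt with rfl | ht1
  · rw [Finset.sum_eq_single_of_mem _ (Finset.self_mem_range_succ _) fun i hi hne => ?_]
    · simpa using hlead
    · have := Finset.mem_range_succ_iff.mp hi
      simp [Nat.sub_ne_zero_of_lt (this.lt_of_ne hne)]
  · have h1t : 0 < 1 - t := sub_pos.mpr ht1
    have heval : ∑ i ∈ Finset.range (p.natDegree + 1),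
        p.coeff i * (t ^ i * (1 - t) ^ (p.natDegree - i)) =
        (1 - t) ^ p.natDegree * p.eval (t / (1 - t)) := by
      rw [eval_eq_sum_range, Finset.mul_sum]
      refine Finset.sum_congr rfl fun i hi => ?_
      rw [div_pow, ← pow_sub_mul_pow (1 - t) (Finset.mem_range_succ_iff.mp hi)]
      field_simp
    rw [heval]
    exact mul_pos (pow_pos h1t _) (hp _ (div_nonneg ht.1 h1t.le))

theorem leadingCoeff_pos_of_forall_eval_pos {p : ℝ[X]} (hp : ∀ z, 0 < z → 0 < p.eval z) :
    0 < p.leadingCoeff := by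
  by_contra! hle
  rcases Nat.eq_zero_or_pos p.natDegree with hdeg | hdeg
  · rw [eq_C_of_natDegree_eq_zero hdeg] at hp hle
    exact absurd (hp 1 one_pos) (by simpa using hle)
  · have hbot := p.tendsto_atBot_of_leadingCoeff_nonpos (natDegree_pos_iff_degree_pos.mp hdeg) hle
    obtain ⟨z, hz, hz0⟩ := ((hbot.eventually_lt_atBot 0).and (eventually_gt_atTop 0)).exists
    exact (hp z hz0).not_gt hz

theorem exists_forall_coeff_one_add_X_pow_mul_nonneg_of_nonneg {p : ℝ[X]}
    (hp : ∀ z, 0 ≤ z → 0 < p.eval z) :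
    ∃ N : ℕ, ∀ k, 0 ≤ ((1 + X) ^ N * p).coeff k := by
  have hlead := leadingCoeff_pos_of_forall_eval_pos fun z hz => hp z hz.le
  have hcont : Continuous fun q : ℝ × ℝ => fallingForm p q.1 q.2 (1 - q.2) := by
    unfold fallingForm
    fun_prop
  have hsmall : ∀ᶠ h in 𝓝 (0 : ℝ), ∀ t ∈ Icc (0 : ℝ) 1, 0 < fallingForm p h t (1 - t) :=
    isCompact_Icc.eventually_forall_of_forall_eventually fun t ht =>
      hcont.continuousAt.eventually_const_lt (fallingForm_zero_pos hp hlead ht)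
  obtain ⟨M, hM, hMn, hM0⟩ :=
    ((tendsto_inv_atTop_nhds_zero_nat.eventually hsmall).and
      ((eventually_ge_atTop p.natDegree).and (eventually_gt_atTop 0))).exists
  refine ⟨M - p.natDegree, fun k => ?_⟩
  rcases lt_or_ge M k with hk | hk
  · refine (coeff_eq_zero_of_natDegree_lt (lt_of_le_of_lt ?_ hk)).ge
    have hX : (1 + X : ℝ[X]).natDegree ≤ 1 := by compute_degree
    exact natDegree_mul_le.trans (by grw [natDegree_pow_le, hX]; omega)
  obtain ⟨m, rfl⟩ := Nat.exists_eq_add_of_le hk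
  have hpos : (0 : ℝ) < (k + m : ℕ) := by exact_mod_cast hM0
  have hratio : (k : ℝ) / (k + m : ℕ) ∈ Icc (0 : ℝ) 1 :=
    ⟨by positivity, div_le_one_of_le₀ (by exact_mod_cast hk) hpos.le⟩
  have hform : 0 < fallingForm p 1 k m := by
    have := mul_pos (pow_pos hpos p.natDegree) (hM _ hratio)
    rwa [← fallingForm_mul, mul_inv_cancel₀ hpos.ne', mul_one_sub, mul_div_cancel₀ _ hpos.ne',
      Nat.cast_add, add_sub_cancel_left] at this
  have hcoeff := descFactorial_mul_coeff_one_add_X_pow_mul p (N := k + m - p.natDegree)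
    (k := k) (m := m) (by omega)
  have hdesc : (0 : ℝ) < (k + m).descFactorial p.natDegree := by
    exact_mod_cast Nat.descFactorial_pos.mpr hMn
  refine nonneg_of_mul_nonneg_right (a := ((k + m).descFactorial p.natDegree : ℝ)) ?_ hdesc
  rw [hcoeff]
  positivity

/-- **Poincaré–Pólya theorem**. -/
theorem exists_forall_coeff_one_add_X_pow_mul_nonneg {p : ℝ[X]} (hp : ∀ z, 0 < z → 0 < p.eval z) :
    ∃ N : ℕ, ∀ k, 0 ≤ ((1 + X) ^ N * p).coeff k := by
  have hp0 : p ≠ 0 := by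
    rintro rfl
    simpa using hp 1 one_pos
  obtain ⟨q, hpq, hq⟩ := exists_eq_pow_rootMultiplicity_mul_and_not_dvd p hp0 0
  rw [C_0, sub_zero] at hpq hq
  have hqpos (z : ℝ) (hz : 0 < z) : 0 < q.eval z := by
    have := hp z hz
    rw [hpq, eval_mul, eval_pow, eval_X] at this
    exact (mul_pos_iff_of_pos_left (pow_pos hz _)).mp this
  have hq0 : 0 < q.eval 0 := by
    refine lt_of_le_of_ne ?_ fun h => hq (X_dvd_iff.mpr ((coeff_zero_eq_eval_zero q).trans h.symm))
    exact ge_of_tendsto (q.continuous.continuousWithinAt (s := Ioi 0) (x := 0))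
      (eventually_mem_nhdsWithin.mono fun z hz => (hqpos z hz).le)
  obtain ⟨N, hN⟩ := exists_forall_coeff_one_add_X_pow_mul_nonneg_of_nonneg fun z hz =>
    hz.eq_or_lt.elim (fun h => h ▸ hq0) (hqpos z)
  refine ⟨N, fun k => ?_⟩
  rw [hpq, mul_left_comm, coeff_X_pow_mul']
  split_ifs
  exacts [hN _, le_rfl]

end Polya

section Laplace

/-- The two-sided Laplace transform, at `-α`, of the restriction of `G` to the interval
from `a` to `b`. -/
noncomputable def laplaceOn (a b : ℝ) (G : ℝ → ℝ) (α : ℝ) : ℝ :=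
  ∫ u in a..b, G u * Real.exp (α * u)

variable {G H : ℝ → ℝ} {a b α : ℝ}

theorem intervalIntegrable_mul_exp (hG : Continuous G) (α a b : ℝ) :
    IntervalIntegrable (fun u => G u * Real.exp (α * u)) MeasureTheory.volume a b :=
  Continuous.intervalIntegrable (by fun_prop) a b

theorem continuous_laplaceOn {T : Type*} [TopologicalSpace T] {a b α : T → ℝ} {G : T → ℝ → ℝ}
    (ha : Continuous a) (hb : Continuous b) (hG : Continuous (Function.uncurry G))
    (hα : Continuous α) : Continuous fun t => laplaceOn (a t) (b t) (G t) (α t) := by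
  have hupper {c : T → ℝ} (hc : Continuous c) :
      Continuous fun t => ∫ u in (0 : ℝ)..c t, G t u * Real.exp (α t * u) := by
    refine intervalIntegral.continuous_parametric_intervalIntegral_of_continuous
      (hG.mul ?_) hc
    fun_prop
  refine ((hupper hb).sub (hupper ha)).congr fun t => ?_
  have hint := intervalIntegrable_mul_exp (hG.uncurry_left t) (α t)
  exact intervalIntegral.integral_interval_sub_left (hint _ _) (hint _ _)

theorem laplaceOn_mono (hab : a ≤ b) (hG : Continuous G) (hH : Continuous H)
    (h : ∀ u ∈ Icc a b, G u ≤ H u) : laplaceOn a b G α ≤ laplaceOn a b H α :=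
  intervalIntegral.integral_mono_on hab (intervalIntegrable_mul_exp hG _ _ _)
    (intervalIntegrable_mul_exp hH _ _ _)
    fun u hu => mul_le_mul_of_nonneg_right (h u hu) (Real.exp_pos _).le

theorem laplaceOn_nonneg (hab : a ≤ b) (h : ∀ u ∈ Icc a b, 0 ≤ G u) : 0 ≤ laplaceOn a b G α :=
  intervalIntegral.integral_nonneg hab fun u hu => mul_nonneg (h u hu) (Real.exp_pos _).le

theorem laplaceOn_add_adjacent (hG : Continuous G) (a b c α : ℝ) :
    laplaceOn a b G α + laplaceOn b c G α = laplaceOn a c G α :=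
  intervalIntegral.integral_add_adjacent_intervals (intervalIntegrable_mul_exp hG _ _ _)
    (intervalIntegrable_mul_exp hG _ _ _)

theorem laplaceOn_comp_neg (a b : ℝ) (G : ℝ → ℝ) (α : ℝ) :
    laplaceOn a b (fun u => G (-u)) α = laplaceOn (-b) (-a) G (-α) := by
  have := intervalIntegral.integral_comp_neg (a := a) (b := b)
    fun u => G u * Real.exp (-α * u)
  simpa only [laplaceOn, neg_mul_neg] using this

theorem laplaceOn_add_right (a b s : ℝ) (G : ℝ → ℝ) (α : ℝ) :
    laplaceOn (a + s) (b + s) G α = Real.exp (α * s) * laplaceOn a b (fun u => G (u + s)) α := by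
  rw [laplaceOn, ← intervalIntegral.integral_comp_add_right, laplaceOn,
    ← intervalIntegral.integral_const_mul]
  refine intervalIntegral.integral_congr fun u _ => ?_
  simp only [mul_add, Real.exp_add]
  ring

theorem laplaceOn_const (a b c α : ℝ) :
    laplaceOn a b (fun _ => c) α = c * laplaceOn a b (fun _ => 1) α := by
  simp only [laplaceOn, one_mul, intervalIntegral.integral_const_mul]

theorem laplaceOn_add_natCast_mul (hG : Continuous G) (a η α : ℝ) (n : ℕ) :
    laplaceOn a (a + n * η) G α = ∑ i ∈ Finset.range n,
      laplaceOn a (a + η) (fun u => G (u + i * η)) α * Real.exp (α * η) ^ i := by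
  induction n with
  | zero => simp [laplaceOn]
  | succ n ih =>
    have hcell := laplaceOn_add_right a (a + η) (n * η) G α
    rw [Finset.sum_range_succ, ← ih, ← laplaceOn_add_adjacent hG a (a + n * η),
      ← Real.exp_nat_mul, mul_left_comm (n : ℝ), mul_comm (laplaceOn _ _ _ _), ← hcell]
    congr 2
    push_cast
    ring

theorem mul_exp_le_mul_exp_of_le {g κ M c u : ℝ} (hκ : 0 ≤ κ) (hM : 0 ≤ M) (hα : 0 ≤ α)
    (hle : -M ≤ g) (hge : c < u → κ ≤ g) :
    (α * (κ * max (u - c) 0) - M) * Real.exp (α * c) ≤ g * Real.exp (α * u) := by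
  rcases le_or_gt u c with huc | huc
  · have hexp : Real.exp (α * u) ≤ Real.exp (α * c) := by gcongr
    rw [max_eq_right (sub_nonpos.mpr huc), mul_zero, mul_zero, zero_sub]
    nlinarith [Real.exp_pos (α * u)]
  · calc (α * (κ * max (u - c) 0) - M) * Real.exp (α * c)
        ≤ κ * (α * (u - c) + 1) * Real.exp (α * c) := by
          gcongr
          rw [max_eq_left (sub_pos.mpr huc).le]
          linarith
      _ ≤ κ * Real.exp (α * (u - c)) * Real.exp (α * c) := by
          gcongr
          exact Real.add_one_le_exp _
      _ = κ * Real.exp (α * u) := by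
          rw [mul_assoc, ← Real.exp_add]
          ring_nf
      _ ≤ g * Real.exp (α * u) := by
          gcongr
          exact hge huc

theorem eventually_laplaceOn_pos_atTop (hG : Continuous G) (hab : a < b) (hb : 0 < G b) :
    ∀ᶠ α in atTop, 0 < laplaceOn a b G α := by
  obtain ⟨c, ⟨-, hcb⟩, hc⟩ := (mem_nhdsLE_iff_exists_mem_Ico_Ioc_subset hab).mp
    (nhdsWithin_le_nhds (hG.continuousAt.eventually_const_lt (half_lt_self hb)))
  obtain ⟨M, hM⟩ := (isCompact_Icc (a := a) (b := b)).exists_bound_of_continuousOn hG.continuousOn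
  have hb_mem : b ∈ Icc a b := right_mem_Icc.mpr hab.le
  have hM0 : 0 ≤ M := (norm_nonneg _).trans (hM b hb_mem)
  set ramp : ℝ → ℝ := fun u => G b / 2 * max (u - c) 0
  have hramp_pos : 0 < ∫ u in a..b, ramp u :=
    intervalIntegral.integral_pos hab (by fun_prop) (fun u _ => by positivity)
      ⟨b, hb_mem, mul_pos (half_pos hb) (lt_max_of_lt_left (sub_pos.mpr hcb))⟩
  filter_upwards [eventually_ge_atTop 0, eventually_gt_atTop (M * (b - a) / ∫ u in a..b, ramp u)]
    with α hα0 hα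
  calc 0 < (α * (∫ u in a..b, ramp u) - M * (b - a)) * Real.exp (α * c) :=
        mul_pos (sub_pos.mpr ((div_lt_iff₀ hramp_pos).mp hα)) (Real.exp_pos _)
    _ = ∫ u in a..b, (α * ramp u - M) * Real.exp (α * c) := by
        rw [intervalIntegral.integral_mul_const, intervalIntegral.integral_sub
          (Continuous.intervalIntegrable (by fun_prop) a b) intervalIntegrable_const,
          intervalIntegral.integral_const_mul α, intervalIntegral.integral_const, smul_eq_mul,
          mul_comm M]
    _ ≤ laplaceOn a b G α := intervalIntegral.integral_mono_on hab.le
        (Continuous.intervalIntegrable (by fun_prop) a b) (intervalIntegrable_mul_exp hG _ _ _)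
        fun u hu => mul_exp_le_mul_exp_of_le (half_pos hb).le hM0 hα0
          (neg_le_of_abs_le (hM u hu)) fun hcu => (hc ⟨hcu, hu.2⟩).le

theorem eventually_laplaceOn_pos_cocompact (hG : Continuous G) (hab : a < b) (ha : 0 < G a)
    (hb : 0 < G b) : ∀ᶠ α in cocompact ℝ, 0 < laplaceOn a b G α := by
  rw [cocompact_eq_atBot_atTop, eventually_sup]
  refine ⟨?_, eventually_laplaceOn_pos_atTop hG hab hb⟩
  have h := eventually_laplaceOn_pos_atTop (G := fun u => G (-u)) (by fun_prop)
    (neg_lt_neg hab) (by simpa using ha)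
  simpa [laplaceOn_comp_neg] using tendsto_neg_atBot_atTop.eventually h

theorem eventually_forall_pos_of_minorant {T A : Type*} [TopologicalSpace T] [TopologicalSpace A]
    {f : T → A → ℝ} (hf : Continuous (Function.uncurry f)) {t₀ : T} (h0 : ∀ α, 0 < f t₀ α)
    {l : Filter T} (hl : l ≤ 𝓝 t₀) {g : A → ℝ} (hg : ∀ᶠ α in cocompact A, 0 < g α)
    (hgf : ∀ᶠ t in l, ∀ α, g α ≤ f t α) : ∀ᶠ t in l, ∀ α, 0 < f t α := by
  obtain ⟨K, hK, hKg⟩ := mem_cocompact.mp hg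
  have hfK : ∀ᶠ t in 𝓝 t₀, ∀ α ∈ K, 0 < f t α :=
    hK.eventually_forall_of_forall_eventually fun α _ =>
      hf.continuousAt.eventually_const_lt (h0 α)
  filter_upwards [hgf, hl hfK] with t hgt hfKt α
  by_cases hα : α ∈ K
  · exact hfKt α hα
  · exact (hKg hα).trans_le (hgt α)

theorem exists_pos_forall_laplaceOn_sub_pos (hG : Continuous G) (hab : a < b) (ha : 0 < G a)
    (hb : 0 < G b) (hpos : ∀ α, 0 < laplaceOn a b G α) :
    ∃ ω > 0, ∀ α, 0 < laplaceOn a b (fun u => G u - ω) α := by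
  obtain ⟨m, hm0, hm⟩ := exists_between (lt_min ha hb)
  rw [lt_min_iff] at hm
  have hsmall : ∀ᶠ ω in 𝓝[>] (0 : ℝ), ∀ α, 0 < laplaceOn a b (fun u => G u - ω) α := by
    refine eventually_forall_pos_of_minorant (t₀ := 0) ?_ (by simpa using hpos)
      nhdsWithin_le_nhds (eventually_laplaceOn_pos_cocompact (G := fun u => G u - m)
        (by fun_prop) hab (sub_pos.mpr hm.1) (sub_pos.mpr hm.2)) ?_
    · exact continuous_laplaceOn (T := ℝ × ℝ) (G := fun t u => G u - t.1) (by fun_prop)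
        (by fun_prop) (by fun_prop) (by fun_prop)
    · filter_upwards [nhdsWithin_le_nhds (Iio_mem_nhds hm0)] with ω hω α
      exact laplaceOn_mono hab.le (by fun_prop) (by fun_prop)
        fun u _ => sub_le_sub_left (le_of_lt hω) _
  obtain ⟨ω, hω, hω0⟩ := (hsmall.and self_mem_nhdsWithin).exists
  exact ⟨ω, hω0, hω⟩

theorem exists_subinterval_forall_laplaceOn_pos (hG : Continuous G) {A A' B' B : ℝ} (hAB : A < B)
    (hAA' : A < A') (hB'B : B' < B) (hA : ∀ u ∈ Ioo A A', 0 < G u) (hB : ∀ u ∈ Ioo B' B, 0 < G u)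
    (hpos : ∀ α, 0 < laplaceOn A B G α) :
    ∃ a ∈ Ioo A A', ∃ b ∈ Ioo B' B, a < b ∧ ∀ α, 0 < laplaceOn a b G α := by
  obtain ⟨a₀, hAa₀, ha₀⟩ := exists_between (lt_min hAA' hAB)
  obtain ⟨b₀, hb₀, hb₀B⟩ := exists_between (max_lt hB'B (lt_min_iff.mp ha₀).2)
  rw [lt_min_iff] at ha₀
  rw [max_lt_iff] at hb₀
  have hends : ∀ᶠ q in 𝓝[>] A ×ˢ 𝓝[<] B, q.1 ∈ Ioo A a₀ ∧ q.2 ∈ Ioo b₀ B :=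
    prod_mem_prod (Ioo_mem_nhdsGT hAa₀) (Ioo_mem_nhdsLT hb₀B)
  have hclose : ∀ᶠ q in 𝓝[>] A ×ˢ 𝓝[<] B, ∀ α, 0 < laplaceOn q.1 q.2 G α := by
    refine eventually_forall_pos_of_minorant (t₀ := (A, B)) ?_ hpos
      (nhds_prod_eq (X := ℝ) (Y := ℝ) ▸ prod_mono nhdsWithin_le_nhds nhdsWithin_le_nhds)
      (eventually_laplaceOn_pos_cocompact hG hb₀.2 (hA a₀ ⟨hAa₀, ha₀.1⟩) (hB b₀ ⟨hb₀.1, hb₀B⟩)) ?_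
    · exact continuous_laplaceOn (T := (ℝ × ℝ) × ℝ) (G := fun _ => G) (by fun_prop)
        (by fun_prop) (by fun_prop) (by fun_prop)
    · filter_upwards [hends] with q ⟨ha, hb⟩ α
      have hleft : 0 ≤ laplaceOn q.1 a₀ G α := laplaceOn_nonneg ha.2.le fun u hu =>
        (hA u ⟨ha.1.trans_le hu.1, hu.2.trans_lt ha₀.1⟩).le
      have hright : 0 ≤ laplaceOn b₀ q.2 G α := laplaceOn_nonneg hb.1.le fun u hu =>
        (hB u ⟨hb₀.1.trans_le hu.1, hu.2.trans_lt hb.2⟩).le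
      rw [← laplaceOn_add_adjacent hG q.1 a₀, ← laplaceOn_add_adjacent hG a₀ b₀ q.2]
      linarith
  obtain ⟨q, hq, ha, hb⟩ := (hclose.and hends).exists
  exact ⟨q.1, ⟨ha.1, ha.2.trans ha₀.1⟩, q.2, ⟨hb₀.1.trans hb.1, hb.2⟩,
    ha.2.trans (hb₀.2.trans hb.1), hq⟩

end Laplace

section BinomialConvolution

variable {G : ℝ → ℝ} {a b : ℝ}

theorem exists_step_approx {ω : ℝ} (hG : ContinuousOn G (Icc a b)) (hab : a < b) (hω : 0 < ω) :
    ∃ η > 0, ∃ (n : ℕ) (c : ℕ → ℝ), a + n * η = b ∧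
      ∀ i < n, ∀ u ∈ Icc (a + i * η) (a + (i + 1) * η), c i ≤ G u ∧ G u ≤ c i + ω := by
  obtain ⟨δ, hδ, hδG⟩ := Metric.uniformContinuousOn_iff.mp
    (isCompact_Icc.uniformContinuousOn_of_continuous hG) (ω / 2) (half_pos hω)
  obtain ⟨n, hn⟩ := exists_nat_gt ((b - a) / δ)
  have hn0 : (0 : ℝ) < n := (div_pos (sub_pos.mpr hab) hδ).trans hn
  have hnη : n * ((b - a) / n) = b - a := mul_div_cancel₀ _ hn0.ne'
  have hηδ : (b - a) / n < δ := (div_lt_comm₀ hδ hn0).mp hn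
  have hη : 0 < (b - a) / n := div_pos (sub_pos.mpr hab) hn0
  generalize (b - a) / n = η at hnη hηδ hη
  refine ⟨η, hη, n, fun i => G (a + i * η) - ω / 2, by linarith, fun i hi u hu => ?_⟩
  have hi' : (i + 1) * η ≤ n * η := by
    gcongr
    exact_mod_cast hi
  have hiη : 0 ≤ i * η := by positivity
  rw [add_mul, one_mul] at hi' hu
  have hclose := hδG u ⟨by linarith [hu.1], by linarith [hu.2]⟩ (a + i * η)
    ⟨by linarith, by linarith⟩ (by rw [Real.dist_eq, abs_lt]; constructor <;> linarith [hu.1, hu.2])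
  rw [Real.dist_eq, abs_lt] at hclose
  constructor <;> linarith

theorem exists_step_polynomial (hG : Continuous G) {ω : ℝ} (hab : a < b) (hω : 0 < ω)
    (hout : ∀ u, b ≤ u → 0 ≤ G u) (hpos : ∀ α, 0 < laplaceOn a b (fun u => G u - ω) α) :
    ∃ η > 0, ∃ P : ℝ[X], (∀ (i : ℕ), ∀ u ∈ Icc (a + i * η) (a + (i + 1) * η), P.coeff i ≤ G u) ∧
      ∀ z, 0 < z → 0 < P.eval z := by
  obtain ⟨η, hη, n, c, hnη, hc⟩ := exists_step_approx hG.continuousOn hab hω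
  refine ⟨η, hη, ∑ i ∈ Finset.range n, C (c i) * X ^ i, fun i u hu => ?_, fun z hz => ?_⟩
  · simp only [finsetSum_coeff, coeff_C_mul_X_pow, Finset.sum_ite_eq, Finset.mem_range]
    split_ifs with hi
    · exact (hc i hi u hu).1
    · have hi' : n * η ≤ i * η := by
        gcongr
        exact not_lt.mp hi
      exact hout u (by linarith [hu.1])
  · obtain ⟨α, rfl⟩ : ∃ α, Real.exp (α * η) = z :=
      ⟨Real.log z / η, by rw [div_mul_cancel₀ _ hη.ne', Real.exp_log hz]⟩
    set W := laplaceOn a (a + η) (fun _ => 1) α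
    have hW : 0 < W := intervalIntegral.intervalIntegral_pos_of_pos
      (intervalIntegrable_mul_exp continuous_const _ _ _) (fun u => by positivity) (by linarith)
    have hcell (i : ℕ) (hi : i < n) :
        laplaceOn a (a + η) (fun u => G (u + i * η) - ω) α ≤ c i * W := by
      rw [← laplaceOn_const]
      refine laplaceOn_mono (by linarith) (by fun_prop) continuous_const fun u hu => ?_
      exact sub_le_iff_le_add.mpr
        (hc i hi (u + i * η) ⟨by linarith [hu.1], by linarith [hu.2]⟩).2
    have hle : laplaceOn a b (fun u => G u - ω) α ≤
        (∑ i ∈ Finset.range n, C (c i) * X ^ i).eval (Real.exp (α * η)) * W := by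
      simp only [eval_finsetSum, eval_mul, eval_C, eval_pow, eval_X]
      rw [← hnη, laplaceOn_add_natCast_mul (by fun_prop), Finset.sum_mul]
      refine Finset.sum_le_sum fun i hi => ?_
      grw [mul_right_comm, hcell i (Finset.mem_range.mp hi)]
    exact pos_of_mul_pos_left ((hpos α).trans_le hle) hW.le

theorem exists_binomial_convolution_nonneg_of_step_polynomial {η : ℝ} (hη : 0 < η) {P : ℝ[X]}
    (hout : ∀ u < a, 0 ≤ G u)
    (hPG : ∀ (i : ℕ), ∀ u ∈ Icc (a + i * η) (a + (i + 1) * η), P.coeff i ≤ G u)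
    (hP : ∀ z, 0 < z → 0 < P.eval z) :
    ∃ N : ℕ, ∀ u, 0 ≤ ∑ k ∈ Finset.range (N + 1), (N.choose k : ℝ) * G (u - k * η) := by
  obtain ⟨N, hN⟩ := exists_forall_coeff_one_add_X_pow_mul_nonneg hP
  refine ⟨N, fun u => ?_⟩
  rcases lt_or_ge u a with hua | hua
  · refine Finset.sum_nonneg fun k _ => mul_nonneg (Nat.cast_nonneg _) (hout _ ?_)
    have : 0 ≤ k * η := by positivity
    linarith
  set j := ⌊(u - a) / η⌋₊
  have hj_le : j * η ≤ u - a := by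
    rw [← le_div_iff₀ hη]
    exact Nat.floor_le (div_nonneg (sub_nonneg.mpr hua) hη.le)
  have hlt_j : u - a < (j + 1) * η := by
    rw [← div_lt_iff₀ hη]
    exact Nat.lt_floor_add_one _
  have hcoeff (k : ℕ) : (X ^ k * P).coeff j ≤ G (u - k * η) := by
    rw [coeff_X_pow_mul']
    split_ifs with hkj
    · refine hPG _ _ ?_
      rw [Nat.cast_sub hkj]
      constructor <;> linarith
    · have : (j + 1) * η ≤ k * η := by
        gcongr
        exact_mod_cast not_le.mp hkj
      exact hout _ (by linarith)
  calc 0 ≤ ((1 + X) ^ N * P).coeff j := hN j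
    _ = ∑ k ∈ Finset.range (N + 1), (N.choose k : ℝ) * (X ^ k * P).coeff j := by
        rw [add_comm, add_pow, Finset.sum_mul, finsetSum_coeff]
        refine Finset.sum_congr rfl fun k _ => ?_
        rw [one_pow, mul_one, ← C_eq_natCast, mul_comm (X ^ k), mul_assoc, coeff_C_mul]
    _ ≤ _ := by
        gcongr
        exact hcoeff _

theorem exists_binomial_convolution_nonneg (hG : Continuous G) {A A' B' B : ℝ} (hAB : A < B)
    (hAA' : A < A') (hB'B : B' < B) (hA : ∀ u ∈ Ioo A A', 0 < G u) (hB : ∀ u ∈ Ioo B' B, 0 < G u)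
    (hout : ∀ u ∉ Ioo A B, 0 ≤ G u) (hpos : ∀ α, 0 < laplaceOn A B G α) :
    ∃ (η : ℝ) (N : ℕ), ∀ u, 0 ≤ ∑ k ∈ Finset.range (N + 1), (N.choose k : ℝ) * G (u - k * η) := by
  obtain ⟨a, ha, b, hb, hab, hpos'⟩ :=
    exists_subinterval_forall_laplaceOn_pos hG hAB hAA' hB'B hA hB hpos
  obtain ⟨ω, hω, hω'⟩ := exists_pos_forall_laplaceOn_sub_pos hG hab (hA a ha) (hB b hb) hpos'
  have hleft (u : ℝ) (hu : u < a) : 0 ≤ G u := by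
    rcases le_or_gt u A with h | h
    exacts [hout u fun hu => hu.1.not_ge h, (hA u ⟨h, hu.trans ha.2⟩).le]
  have hright (u : ℝ) (hu : b ≤ u) : 0 ≤ G u := by
    rcases le_or_gt B u with h | h
    exacts [hout u fun hu => hu.2.not_ge h, (hB u ⟨hb.1.trans_le hu, h⟩).le]
  obtain ⟨η, hη, P, hPG, hP⟩ := exists_step_polynomial hG hab hω hright hω'
  exact ⟨η, exists_binomial_convolution_nonneg_of_step_polynomial hη hleft hPG hP⟩

open MeasureTheory in
theorem laplaceOn_nonneg_of_sum_comp_sub_nonneg {κ : Type*} {s : Finset κ} (hs : s.Nonempty)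
    (w : κ → ℝ) {A B : ℝ} (hG : Continuous G) (hout : ∀ u ∉ Ioo A B, G u = 0)
    (hsum : ∀ u, 0 ≤ ∑ j ∈ s, G (u - w j)) (α : ℝ) : 0 ≤ laplaceOn A B G α := by
  set F : ℝ → ℝ := fun u => G u * Real.exp (α * u) with hF
  have hF_int : Integrable F := by
    refine Continuous.integrable_of_hasCompactSupport (by fun_prop)
      (HasCompactSupport.intro (isCompact_Icc (a := A) (b := B)) fun u hu => ?_)
    simp [hF, hout u fun h => hu (Ioo_subset_Icc_self h)]
  have hF_eq : laplaceOn A B G α = ∫ u, F u := by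
    refine intervalIntegral.integral_eq_integral_of_support_subset fun u hu => ?_
    by_contra hu'
    exact hu (by simp [hout u fun h => hu' (Ioo_subset_Ioc_self h)])
  have htranslate (j : κ) : (fun u => G (u - w j) * Real.exp (α * u)) =
      fun u => Real.exp (α * w j) * F (u - w j) := by
    ext u
    rw [hF, mul_left_comm, ← Real.exp_add]
    ring_nf
  have hsum_eq : ∫ u, (∑ j ∈ s, G (u - w j)) * Real.exp (α * u) =
      (∑ j ∈ s, Real.exp (α * w j)) * laplaceOn A B G α := by
    simp_rw [Finset.sum_mul]
    rw [integral_finsetSum]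
    · simp_rw [htranslate, integral_const_mul, integral_sub_right_eq_self F, hF_eq]
    · intro j _
      rw [htranslate]
      exact (hF_int.comp_sub_right _).const_mul _
  refine nonneg_of_mul_nonneg_right (hsum_eq ▸ integral_nonneg fun u => ?_)
    (Finset.sum_pos (fun j _ => Real.exp_pos (α * w j)) hs)
  exact mul_nonneg (hsum u) (Real.exp_pos _).le

end BinomialConvolution

section Hinge

variable {ι κ : Type*} [Fintype ι] [Fintype κ]

/-- The hinge transform of a vector on the logarithmic scale: up to the factor `exp u`, the part
of the mass of `v` above the threshold `exp u`. -/
noncomputable def hinge (v : ι → ℝ) (u : ℝ) : ℝ :=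
  ∑ i, max (v i / Real.exp u - 1) 0

theorem continuous_hinge (v : ι → ℝ) : Continuous (hinge v) := by
  unfold hinge
  fun_prop (disch := simp)

theorem exp_mul_hinge (v : ι → ℝ) (u : ℝ) :
    Real.exp u * hinge v u = ∑ i, max (v i - Real.exp u) 0 := by
  rw [hinge, Finset.mul_sum]
  refine Finset.sum_congr rfl fun i _ => ?_
  rw [mul_max_of_nonneg _ _ (Real.exp_pos u).le, mul_zero, mul_sub_one,
    mul_div_cancel₀ _ (Real.exp_ne_zero u)]

theorem hinge_eq_zero {v : ι → ℝ} {u : ℝ} (h : ∀ i, v i ≤ Real.exp u) : hinge v u = 0 :=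
  Finset.sum_eq_zero fun i _ =>
    max_eq_right (sub_nonpos.mpr ((div_le_one (Real.exp_pos u)).mpr (h i)))

theorem hinge_nonneg (v : ι → ℝ) (u : ℝ) : 0 ≤ hinge v u :=
  Finset.sum_nonneg fun _ _ => le_max_right _ _

theorem hinge_pos {v : ι → ℝ} {u : ℝ} (h : ∃ i, Real.exp u < v i) : 0 < hinge v u := by
  obtain ⟨i, hi⟩ := h
  exact Finset.sum_pos' (fun _ _ => le_max_right _ _) ⟨i, Finset.mem_univ i,
    lt_max_of_lt_left (sub_pos.mpr ((one_lt_div (Real.exp_pos u)).mpr hi))⟩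

theorem sum_div_exp_sub_one (v : ι → ℝ) (u : ℝ) :
    ∑ i, (v i / Real.exp u - 1) = (∑ i, v i) / Real.exp u - Fintype.card ι := by
  rw [Finset.sum_sub_distrib, Finset.sum_div, Finset.sum_const, nsmul_one, Finset.card_univ]

theorem hinge_eq_sum_div_sub_card {v : ι → ℝ} {u : ℝ} (h : ∀ i, Real.exp u ≤ v i) :
    hinge v u = (∑ i, v i) / Real.exp u - Fintype.card ι := by
  rw [← sum_div_exp_sub_one]
  exact Finset.sum_congr rfl fun i _ =>
    max_eq_left (sub_nonneg.mpr ((one_le_div (Real.exp_pos u)).mpr (h i)))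

theorem sum_div_sub_card_le_hinge (v : ι → ℝ) (u : ℝ) :
    (∑ i, v i) / Real.exp u - Fintype.card ι ≤ hinge v u := by
  rw [← sum_div_exp_sub_one]
  exact Finset.sum_le_sum fun _ _ => le_max_left _ _

theorem sum_div_sub_card_lt_hinge {v : ι → ℝ} {u : ℝ} (h : ∃ i, v i < Real.exp u) :
    (∑ i, v i) / Real.exp u - Fintype.card ι < hinge v u := by
  obtain ⟨i, hi⟩ := h
  rw [← sum_div_exp_sub_one]
  exact Finset.sum_lt_sum (fun _ _ => le_max_left _ _) ⟨i, Finset.mem_univ i,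
    lt_max_of_lt_right (sub_neg.mpr ((div_lt_one (Real.exp_pos u)).mpr hi))⟩

theorem hinge_const_le {v : ι → ℝ} {r : ℝ} (h : ∑ i, v i = Fintype.card ι * r) (u : ℝ) :
    hinge (fun _ : ι => r) u ≤ hinge v u := by
  rcases le_total r (Real.exp u) with hr | hr
  · rw [hinge_eq_zero fun _ => hr]
    exact hinge_nonneg v u
  · rw [hinge_eq_sum_div_sub_card fun _ => hr, Finset.sum_const, nsmul_eq_mul, Finset.card_univ,
      ← h]
    exact sum_div_sub_card_le_hinge v u

theorem hinge_pvTensor (v : ι → ℝ) {c : κ → ℝ} (hc : ∀ j, 0 ≤ c j) (u : ℝ) :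
    hinge (pvTensor v c) u = ∑ j with 0 < c j, hinge v (u - Real.log (c j)) := by
  rw [hinge, Fintype.sum_prod_type_right, Finset.sum_filter]
  refine Finset.sum_congr rfl fun j _ => ?_
  split_ifs with hj
  · rw [hinge, Real.exp_sub, Real.exp_log hj]
    simp only [pvTensor, div_div_eq_mul_div]
  · simp [pvTensor, le_antisymm (not_lt.mp hj) (hc j)]

end Hinge

section Majorization

variable {ι κ : Type*} [Fintype ι] [Fintype κ]

theorem sum_max_eq_sum_sub_card_mul {x : ι → ℝ} {t : ℝ} {s : Finset ι} (hs : ∀ i ∈ s, t ≤ x i)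
    (hsc : ∀ i ∉ s, x i ≤ t) : ∑ i, max (x i - t) 0 = ∑ i ∈ s, x i - s.card * t := by
  rw [← Finset.sum_subset s.subset_univ
      fun i _ hi => max_eq_right (sub_nonpos.mpr (hsc i hi)),
    Finset.sum_congr rfl fun i hi => max_eq_left (sub_nonneg.mpr (hs i hi)),
    Finset.sum_sub_distrib, Finset.sum_const, nsmul_eq_mul]

theorem exists_card_eq_forall_notMem_le {α : Type*} [LinearOrder α] (x : ι → α) {k : ℕ}
    (hk : k ≤ Fintype.card ι) : ∃ s : Finset ι, s.card = k ∧ ∀ i ∈ s, ∀ j ∉ s, x j ≤ x i := by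
  classical
  induction k with
  | zero => exact ⟨∅, rfl, by simp⟩
  | succ k ih =>
    obtain ⟨s, rfl, hs⟩ := ih (Nat.le_of_succ_le hk)
    obtain ⟨m, hm, hmax⟩ := Finset.exists_max_image sᶜ x
      (Finset.card_pos.mp (by rw [Finset.card_compl]; omega))
    refine ⟨insert m s, Finset.card_insert_of_notMem (Finset.mem_compl.mp hm), fun i hi j hj => ?_⟩
    have hjs : j ∉ s := fun h => hj (Finset.mem_insert_of_mem h)
    rcases Finset.mem_insert.mp hi with rfl | hi
    exacts [hmax j (Finset.mem_compl.mpr hjs), hs i hi j hjs]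

variable [DecidableEq ι] [DecidableEq κ]

theorem sum_le_topSum (x : ι → ℝ) {k : ℕ} {s : Finset ι} (hs : s.card ≤ k) :
    ∑ i ∈ s, x i ≤ topSum x k :=
  Finset.le_sup' (fun s => ∑ i ∈ s, x i)
    (Finset.mem_filter.mpr ⟨Finset.mem_powerset.mpr s.subset_univ, hs⟩)

theorem topSum_le_add_sum_max (x : ι → ℝ) (k : ℕ) {t : ℝ} (ht : 0 ≤ t) :
    topSum x k ≤ k * t + ∑ i, max (x i - t) 0 := by
  refine Finset.sup'_le _ _ fun s hs => ?_
  calc ∑ i ∈ s, x i ≤ ∑ i ∈ s, (t + max (x i - t) 0) :=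
        Finset.sum_le_sum fun i _ => by linarith [le_max_left (x i - t) 0]
    _ = s.card * t + ∑ i ∈ s, max (x i - t) 0 := by
        rw [Finset.sum_add_distrib, Finset.sum_const, nsmul_eq_mul]
    _ ≤ k * t + ∑ i, max (x i - t) 0 := by
        gcongr
        exacts [(Finset.mem_filter.mp hs).2, s.subset_univ]

theorem exists_add_sum_max_le_topSum {x : ι → ℝ} (hx : ∀ i, 0 ≤ x i) (k : ℕ) :
    ∃ t, 0 ≤ t ∧ k * t + ∑ i, max (x i - t) 0 ≤ topSum x k := by
  rcases le_or_gt (Fintype.card ι) k with hk | hk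
  · refine ⟨0, le_rfl, ?_⟩
    simpa [max_eq_left (hx _)] using sum_le_topSum x (s := Finset.univ) hk
  · obtain ⟨s, rfl, hs⟩ := exists_card_eq_forall_notMem_le x hk.le
    obtain ⟨m, hm, hmax⟩ := Finset.exists_max_image sᶜ x
      (Finset.card_pos.mp (by rw [Finset.card_compl]; omega))
    refine ⟨x m, hx m, ?_⟩
    rw [sum_max_eq_sum_sub_card_mul (fun i hi => hs i hi m (Finset.mem_compl.mp hm))
      fun i hi => hmax i (Finset.mem_compl.mpr hi), add_sub_cancel]
    exact sum_le_topSum x le_rfl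

theorem PMaj.sum_max_le {x : ι → ℝ} {y : κ → ℝ} (h : PMaj x y) {t : ℝ} (ht : 0 ≤ t) :
    ∑ i, max (x i - t) 0 ≤ ∑ j, max (y j - t) 0 := by
  rw [sum_max_eq_sum_sub_card_mul (x := x) (s := {i | t < x i})
    (fun i hi => (Finset.mem_filter.mp hi).2.le) fun i hi => by simpa using hi, sub_le_iff_le_add']
  exact (sum_le_topSum x le_rfl).trans ((h.1 _).trans (topSum_le_add_sum_max y _ ht))

theorem pMaj_iff_forall_hinge_le {x : ι → ℝ} {y : κ → ℝ} (hx : ∀ i, 0 ≤ x i) (hy : ∀ j, 0 ≤ y j) :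
    PMaj x y ↔ ∑ i, x i = ∑ j, y j ∧ ∀ u, hinge x u ≤ hinge y u := by
  have hscale (u : ℝ) : hinge x u ≤ hinge y u ↔
      ∑ i, max (x i - Real.exp u) 0 ≤ ∑ j, max (y j - Real.exp u) 0 := by
    rw [← exp_mul_hinge, ← exp_mul_hinge, mul_le_mul_iff_of_pos_left (Real.exp_pos u)]
  refine ⟨fun h => ⟨h.2, fun u => (hscale u).mpr (h.sum_max_le (Real.exp_pos u).le)⟩,
    fun ⟨hsum, h⟩ => ⟨fun k => ?_, hsum⟩⟩
  obtain ⟨t, ht, hty⟩ := exists_add_sum_max_le_topSum hy k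
  refine (topSum_le_add_sum_max x k ht).trans (le_trans ?_ hty)
  gcongr 1
  rcases ht.eq_or_lt with rfl | ht
  · simp [max_eq_left (hx _), max_eq_left (hy _), hsum]
  · simpa [Real.exp_log ht] using (hscale (Real.log t)).mp (h _)

end Majorization

section Trumping

variable {ι κ : Type*} [Fintype ι] [Fintype κ]

/-- The difference of the hinge transforms of `y` and `x`. Tensoring `x` and `y` with a catalyst
replaces it by a sum of its translates. -/
noncomputable def hingeGap (x y : ι → ℝ) (u : ℝ) : ℝ :=
  hinge y u - hinge x u

theorem continuous_hingeGap (x y : ι → ℝ) : Continuous (hingeGap x y) :=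
  (continuous_hinge y).sub (continuous_hinge x)

theorem hingeGap_eq_zero {x y : ι → ℝ} {A B : ℝ} (hsum : ∑ i, x i = ∑ i, y i)
    (hx : ∀ i, x i ∈ Icc (Real.exp A) (Real.exp B))
    (hy : ∀ i, y i ∈ Icc (Real.exp A) (Real.exp B)) :
    ∀ u ∉ Ioo A B, hingeGap x y u = 0 := by
  intro u hu
  rw [hingeGap, sub_eq_zero]
  rcases le_or_gt u A with huA | huA
  · have hle := Real.exp_le_exp.mpr huA
    rw [hinge_eq_sum_div_sub_card fun i => hle.trans (hx i).1,
      hinge_eq_sum_div_sub_card fun i => hle.trans (hy i).1, hsum]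
  · have hle := Real.exp_le_exp.mpr (not_lt.mp fun huB => hu ⟨huA, huB⟩)
    rw [hinge_eq_zero fun i => (hx i).2.trans hle, hinge_eq_zero fun i => (hy i).2.trans hle]

theorem hingeGap_pos_of_exp_le {x y : ι → ℝ} {u : ℝ} (hsum : ∑ i, x i = ∑ i, y i)
    (hx : ∀ i, Real.exp u ≤ x i) (hy : ∃ j, y j < Real.exp u) : 0 < hingeGap x y u := by
  rw [hingeGap, sub_pos, hinge_eq_sum_div_sub_card hx, hsum]
  exact sum_div_sub_card_lt_hinge hy

theorem hingeGap_pos_of_le_exp {x y : ι → ℝ} {u : ℝ} (hx : ∀ i, x i ≤ Real.exp u)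
    (hy : ∃ j, Real.exp u < y j) : 0 < hingeGap x y u := by
  rw [hingeGap, sub_pos, hinge_eq_zero hx]
  exact hinge_pos hy

theorem sum_pvTensor (x : ι → ℝ) (c : κ → ℝ) : ∑ q, pvTensor x c q = (∑ i, x i) * ∑ j, c j := by
  simp only [pvTensor, Fintype.sum_prod_type, Finset.sum_mul_sum]

variable [DecidableEq ι] {x y : ι → ℝ}

theorem pMaj_pvTensor_iff [DecidableEq κ] {c : κ → ℝ} (hx : ∀ i, 0 ≤ x i) (hy : ∀ i, 0 ≤ y i)
    (hsum : ∑ i, x i = ∑ i, y i) (hc : ∀ j, 0 ≤ c j) :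
    PMaj (pvTensor x c) (pvTensor y c) ↔
      ∀ u, 0 ≤ ∑ j with 0 < c j, hingeGap x y (u - Real.log (c j)) := by
  rw [pMaj_iff_forall_hinge_le (x := pvTensor x c) (y := pvTensor y c)
    (fun q => mul_nonneg (hx _) (hc _)) fun q => mul_nonneg (hy _) (hc _)]
  simp only [sum_pvTensor, hsum, true_and, hinge_pvTensor _ hc, hingeGap, Finset.sum_sub_distrib,
    sub_nonneg]

/-- Trumping: `x` is majorized by `y` with the help of a catalyst. -/
def PTrump (x y : ι → ℝ) : Prop :=
  ∃ (k : ℕ) (c : Fin k → ℝ), IsProbVec c ∧ PMaj (pvTensor x c) (pvTensor y c)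

theorem pTrump_of_sum_hingeGap_nonneg [Nonempty κ] (hx : ∀ i, 0 ≤ x i) (hy : ∀ i, 0 ≤ y i)
    (hsum : ∑ i, x i = ∑ i, y i) (w : κ → ℝ) (h : ∀ u, 0 ≤ ∑ j, hingeGap x y (u - w j)) :
    PTrump x y := by
  set Z := ∑ j, Real.exp (w j)
  have hZ : 0 < Z := Finset.sum_pos (fun _ _ => Real.exp_pos _) Finset.univ_nonempty
  set e := Fintype.equivFin κ
  set c : Fin (Fintype.card κ) → ℝ := fun j => Real.exp (w (e.symm j)) / Z with hc
  have hcpos (j : Fin (Fintype.card κ)) : 0 < c j := div_pos (Real.exp_pos _) hZ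
  refine ⟨_, c, ⟨fun j => (hcpos j).le, ?_⟩,
    (pMaj_pvTensor_iff hx hy hsum fun j => (hcpos j).le).mpr fun u => ?_⟩
  · rw [hc, ← Finset.sum_div, e.symm.sum_comp fun j => Real.exp (w j), div_self hZ.ne']
  · rw [Finset.filter_true_of_mem fun j _ => hcpos j]
    have hlog (j : Fin (Fintype.card κ)) : Real.log (c j) = w (e.symm j) - Real.log Z := by
      rw [hc, Real.log_div (Real.exp_ne_zero _) hZ.ne', Real.log_exp]
    simp_rw [hlog, sub_sub_eq_add_sub]
    rw [e.symm.sum_comp fun j => hingeGap x y (u + Real.log Z - w j)]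
    exact h _

theorem pTrump_of_binomial_convolution_nonneg (hx : ∀ i, 0 ≤ x i) (hy : ∀ i, 0 ≤ y i)
    (hsum : ∑ i, x i = ∑ i, y i) {η : ℝ} {N : ℕ}
    (h : ∀ u, 0 ≤ ∑ k ∈ Finset.range (N + 1), (N.choose k : ℝ) * hingeGap x y (u - k * η)) :
    PTrump x y := by
  refine pTrump_of_sum_hingeGap_nonneg (κ := Finset (Fin N)) hx hy hsum (fun S => S.card * η)
    fun u => ?_
  rw [← Finset.powerset_univ, Finset.sum_powerset_apply_card fun k => hingeGap x y (u - k * η)]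
  simpa using h u

end Trumping

section PowerEntropies

/-- The power entropy functions on the positive reals, normalized to have second derivative
`v ^ (α - 2)`; `∑ i, powerEntropy α (x i)` is a decreasing function of the Rényi entropy of order
`α ≠ 0` of `x`. -/
noncomputable def powerEntropy (α v : ℝ) : ℝ :=
  if α = 0 then -Real.log v else if α = 1 then v * Real.log v else v ^ α / (α * (α - 1))

/-- The derivative of `powerEntropy α`. -/
noncomputable def powerEntropyDeriv (α v : ℝ) : ℝ :=
  if α = 1 then Real.log v + 1 else v ^ (α - 1) / (α - 1)

variable {α v : ℝ}

theorem powerEntropy_zero : powerEntropy 0 = fun v => -Real.log v := by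
  simp [funext_iff, powerEntropy]

theorem powerEntropy_one : powerEntropy 1 = fun v => v * Real.log v := by
  simp [funext_iff, powerEntropy]

theorem powerEntropy_of_ne (h0 : α ≠ 0) (h1 : α ≠ 1) :
    powerEntropy α = fun v => v ^ α / (α * (α - 1)) := by
  simp [funext_iff, powerEntropy, h0, h1]

theorem powerEntropyDeriv_one : powerEntropyDeriv 1 = fun v => Real.log v + 1 := by
  simp [funext_iff, powerEntropyDeriv]

theorem powerEntropyDeriv_of_ne (h1 : α ≠ 1) :
    powerEntropyDeriv α = fun v => v ^ (α - 1) / (α - 1) := by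
  simp [funext_iff, powerEntropyDeriv, h1]

theorem hasDerivAt_powerEntropy (α : ℝ) (hv : 0 < v) :
    HasDerivAt (powerEntropy α) (powerEntropyDeriv α v) v := by
  rcases eq_or_ne α 0 with rfl | h0
  · rw [powerEntropy_zero]
    exact (Real.hasDerivAt_log hv.ne').fun_neg.congr_deriv
      (by simp [powerEntropyDeriv, Real.rpow_neg_one, div_neg])
  rcases eq_or_ne α 1 with rfl | h1
  · rw [powerEntropy_one, powerEntropyDeriv_one]
    exact Real.hasDerivAt_mul_log hv.ne'
  · rw [powerEntropy_of_ne h0 h1, powerEntropyDeriv_of_ne h1]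
    exact ((Real.hasDerivAt_rpow_const (Or.inl hv.ne')).div_const _).congr_deriv
      (mul_div_mul_left _ _ h0)

theorem hasDerivAt_powerEntropyDeriv (α : ℝ) (hv : 0 < v) :
    HasDerivAt (powerEntropyDeriv α) (v ^ (α - 2)) v := by
  rcases eq_or_ne α 1 with rfl | h1
  · rw [powerEntropyDeriv_one]
    exact ((Real.hasDerivAt_log hv.ne').add_const 1).congr_deriv
      (by norm_num [Real.rpow_neg_one])
  · rw [powerEntropyDeriv_of_ne h1]
    refine ((Real.hasDerivAt_rpow_const (Or.inl hv.ne')).div_const _).congr_deriv ?_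
    rw [mul_div_cancel_left₀ _ (sub_ne_zero.mpr h1)]
    ring_nf

theorem strictConvexOn_powerEntropy (α : ℝ) : StrictConvexOn ℝ (Ioi 0) (powerEntropy α) := by
  have hmono : StrictMonoOn (powerEntropyDeriv α) (Ioi 0) :=
    strictMonoOn_of_deriv_pos (convex_Ioi 0)
      (fun v hv => (hasDerivAt_powerEntropyDeriv α hv).continuousAt.continuousWithinAt)
      fun v hv => by
        rw [interior_Ioi] at hv
        rw [(hasDerivAt_powerEntropyDeriv α hv).deriv]
        exact Real.rpow_pos_of_pos hv _
  refine StrictMonoOn.strictConvexOn_of_deriv (convex_Ioi 0)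
    (fun v hv => (hasDerivAt_powerEntropy α hv).continuousAt.continuousWithinAt) ?_
  rw [interior_Ioi]
  exact hmono.congr fun v hv => (hasDerivAt_powerEntropy α hv).deriv.symm

theorem laplaceOn_div_exp_sub_one {A B : ℝ} :
    laplaceOn A B (fun u => v / Real.exp u - 1) α =
      powerEntropy α (Real.exp B) + powerEntropyDeriv α (Real.exp B) * (v - Real.exp B) -
        (powerEntropy α (Real.exp A) + powerEntropyDeriv α (Real.exp A) * (v - Real.exp A)) := by
  refine intervalIntegral.integral_eq_sub_of_hasDerivAt (f := fun u =>
    powerEntropy α (Real.exp u) + powerEntropyDeriv α (Real.exp u) * (v - Real.exp u))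
    (fun u _ => ?_) (intervalIntegrable_mul_exp (by fun_prop (disch := simp)) _ _ _)
  have hexp := Real.hasDerivAt_exp u
  refine (((hasDerivAt_powerEntropy α (Real.exp_pos u)).comp u hexp).add
    (((hasDerivAt_powerEntropyDeriv α (Real.exp_pos u)).comp u hexp).mul
      (hexp.const_sub v))).congr_deriv ?_
  have hpow : Real.exp (α * u) = Real.exp u ^ (α - 2) * Real.exp u * Real.exp u := by
    rw [← Real.exp_mul, ← Real.exp_add, ← Real.exp_add]
    ring_nf
  simp only [Function.comp_apply]
  rw [hpow]
  field_simp
  ring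

theorem laplaceOn_max_div_exp_sub_one {A B : ℝ} (hv : v ∈ Icc (Real.exp A) (Real.exp B)) (α : ℝ) :
    laplaceOn A B (fun u => max (v / Real.exp u - 1) 0) α = powerEntropy α v -
      (powerEntropy α (Real.exp A) + powerEntropyDeriv α (Real.exp A) * (v - Real.exp A)) := by
  have hv0 : 0 < v := (Real.exp_pos A).trans_le hv.1
  have hcont : Continuous fun u => max (v / Real.exp u - 1) 0 := by fun_prop (disch := simp)
  have hbelow : laplaceOn A (Real.log v) (fun u => max (v / Real.exp u - 1) 0) α =
      laplaceOn A (Real.log v) (fun u => v / Real.exp u - 1) α :=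
    intervalIntegral.integral_congr fun u hu => by
      rw [uIcc_of_le ((Real.le_log_iff_exp_le hv0).mpr hv.1)] at hu
      have hle : Real.exp u ≤ v := (Real.le_log_iff_exp_le hv0).mp hu.2
      simp only [max_eq_left (sub_nonneg.mpr ((one_le_div (Real.exp_pos u)).mpr hle))]
  have habove : laplaceOn (Real.log v) B (fun u => max (v / Real.exp u - 1) 0) α =
      laplaceOn (Real.log v) B (fun _ => 0) α :=
    intervalIntegral.integral_congr fun u hu => by
      rw [uIcc_of_le ((Real.log_le_iff_le_exp hv0).mpr hv.2)] at hu
      have hle : v ≤ Real.exp u := (Real.log_le_iff_le_exp hv0).mp hu.1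
      simp only [max_eq_right (sub_nonpos.mpr ((div_le_one (Real.exp_pos u)).mpr hle))]
  rw [← laplaceOn_add_adjacent hcont A (Real.log v), hbelow, habove, laplaceOn_const, zero_mul,
    add_zero, laplaceOn_div_exp_sub_one, Real.exp_log hv0, sub_self, mul_zero, add_zero]

variable {ι : Type*} [Fintype ι] {x y : ι → ℝ}

theorem laplaceOn_hinge {A B : ℝ} (hx : ∀ i, x i ∈ Icc (Real.exp A) (Real.exp B)) (α : ℝ) :
    laplaceOn A B (hinge x) α = ∑ i, powerEntropy α (x i) -
      (Fintype.card ι * powerEntropy α (Real.exp A) +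
        powerEntropyDeriv α (Real.exp A) * (∑ i, x i - Fintype.card ι * Real.exp A)) := by
  have hsum : laplaceOn A B (hinge x) α =
      ∑ i, laplaceOn A B (fun u => max (x i / Real.exp u - 1) 0) α := by
    simp only [laplaceOn, hinge, Finset.sum_mul]
    exact intervalIntegral.integral_finsetSum fun i _ =>
      intervalIntegrable_mul_exp (by fun_prop (disch := simp)) _ _ _
  rw [hsum, Finset.sum_congr rfl fun i _ => laplaceOn_max_div_exp_sub_one (hx i) α]
  simp only [Finset.sum_sub_distrib, Finset.sum_add_distrib, Finset.sum_const, Finset.card_univ,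
    nsmul_eq_mul, ← Finset.mul_sum]

theorem laplaceOn_hingeGap {A B : ℝ} (hsum : ∑ i, x i = ∑ i, y i)
    (hx : ∀ i, x i ∈ Icc (Real.exp A) (Real.exp B)) (hy : ∀ i, y i ∈ Icc (Real.exp A) (Real.exp B))
    (α : ℝ) : laplaceOn A B (hingeGap x y) α =
      ∑ i, powerEntropy α (y i) - ∑ i, powerEntropy α (x i) := by
  have hsub : laplaceOn A B (hingeGap x y) α =
      laplaceOn A B (hinge y) α - laplaceOn A B (hinge x) α := by
    simp only [laplaceOn, hingeGap, sub_mul]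
    exact intervalIntegral.integral_sub (intervalIntegrable_mul_exp (continuous_hinge y) _ _ _)
      (intervalIntegrable_mul_exp (continuous_hinge x) _ _ _)
  rw [hsub, laplaceOn_hinge hx, laplaceOn_hinge hy, hsum, sub_sub_sub_cancel_right]

theorem sum_powerEntropy_le_iff_of_pos (hα : 0 < α * (α - 1)) :
    ∑ i, powerEntropy α (x i) ≤ ∑ i, powerEntropy α (y i) ↔ ∑ i, x i ^ α ≤ ∑ i, y i ^ α := by
  have h0 : α ≠ 0 := left_ne_zero_of_mul hα.ne'
  have h1 : α ≠ 1 := sub_ne_zero.mp (right_ne_zero_of_mul hα.ne')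
  simp only [powerEntropy_of_ne h0 h1, ← Finset.sum_div, div_le_div_iff_of_pos_right hα]

theorem sum_powerEntropy_le_iff_of_neg (hα : α * (α - 1) < 0) :
    ∑ i, powerEntropy α (x i) ≤ ∑ i, powerEntropy α (y i) ↔ ∑ i, y i ^ α ≤ ∑ i, x i ^ α := by
  have h0 : α ≠ 0 := left_ne_zero_of_mul hα.ne
  have h1 : α ≠ 1 := sub_ne_zero.mp (right_ne_zero_of_mul hα.ne)
  simp only [powerEntropy_of_ne h0 h1, ← Finset.sum_div, div_le_div_right_of_neg hα]

theorem exists_forall_mem_Icc_exp {κ : Type*} [Finite κ] {v : κ → ℝ} (hv : ∀ i, 0 < v i) :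
    ∃ A B, ∀ i, v i ∈ Icc (Real.exp A) (Real.exp B) := by
  obtain ⟨A, hA⟩ := (finite_range fun i => Real.log (v i)).bddBelow
  obtain ⟨B, hB⟩ := (finite_range fun i => Real.log (v i)).bddAbove
  exact ⟨A, B, fun i => ⟨(Real.le_log_iff_exp_le (hv i)).mp (hA (mem_range_self i)),
    (Real.log_le_iff_le_exp (hv i)).mp (hB (mem_range_self i))⟩⟩

theorem sum_powerEntropy_le_of_dense {s : Set ℝ} (hs : Dense s) (hx : ∀ i, 0 < x i)
    (hy : ∀ i, 0 < y i) (hsum : ∑ i, x i = ∑ i, y i)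
    (h : ∀ α ∈ s, ∑ i, powerEntropy α (x i) ≤ ∑ i, powerEntropy α (y i)) (α : ℝ) :
    ∑ i, powerEntropy α (x i) ≤ ∑ i, powerEntropy α (y i) := by
  obtain ⟨A, B, hAB⟩ := exists_forall_mem_Icc_exp (v := Sum.elim x y) (Sum.forall.mpr ⟨hx, hy⟩)
  obtain ⟨hxAB, hyAB⟩ := Sum.forall.mp hAB
  have hcont : Continuous fun α => laplaceOn A B (hingeGap x y) α :=
    continuous_laplaceOn continuous_const continuous_const
      ((continuous_hingeGap x y).comp continuous_snd) continuous_id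
  simp only [laplaceOn_hingeGap hsum hxAB hyAB] at hcont
  refine sub_nonneg.mp ((isClosed_le continuous_const hcont).closure_subset_iff.mpr ?_ (hs α))
  exact fun α hα => sub_nonneg.mpr (h α hα)

variable [DecidableEq ι]

theorem renyiH_zero_of_pos (hx : ∀ i, 0 < x i) : renyiH 0 x = Real.log (Fintype.card ι) := by
  simp [renyiH, hx]

theorem renyiH_le_iff_sum_powerEntropy_le (hx : ∀ i, 0 < x i) (hy : ∀ i, 0 < y i) (hα : α ≠ 0) :
    renyiH α y ≤ renyiH α x ↔ ∑ i, powerEntropy α (x i) ≤ ∑ i, powerEntropy α (y i) := by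
  cases isEmpty_or_nonempty ι
  · simp [renyiH]
  rcases eq_or_ne α 1 with rfl | h1
  · simp [renyiH, powerEntropy]
  have hlog {v w : ι → ℝ} (hv : ∀ i, 0 < v i) (hw : ∀ i, 0 < w i) :
      Real.log (∑ i, v i ^ α) ≤ Real.log (∑ i, w i ^ α) ↔ ∑ i, v i ^ α ≤ ∑ i, w i ^ α :=
    Real.log_le_log_iff
      (Finset.sum_pos (fun i _ => Real.rpow_pos_of_pos (hv i) α) Finset.univ_nonempty)
      (Finset.sum_pos (fun i _ => Real.rpow_pos_of_pos (hw i) α) Finset.univ_nonempty)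
  simp only [renyiH, if_neg hα, if_neg h1]
  rcases hα.lt_or_gt with hneg | hpos
  · rw [Real.sign_of_neg hneg,
      mul_le_mul_left_of_neg (div_neg_of_neg_of_pos (by norm_num) (by linarith)), hlog hx hy,
      sum_powerEntropy_le_iff_of_pos (by nlinarith)]
  rw [Real.sign_of_pos hpos]
  rcases h1.lt_or_gt with hlt | hgt
  · rw [mul_le_mul_iff_of_pos_left (div_pos one_pos (by linarith)), hlog hy hx,
      sum_powerEntropy_le_iff_of_neg (by nlinarith)]
  · rw [mul_le_mul_left_of_neg (div_neg_of_pos_of_neg one_pos (by linarith)), hlog hx hy,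
      sum_powerEntropy_le_iff_of_pos (by nlinarith)]

theorem forall_renyiH_le_iff (hx : ∀ i, 0 < x i) (hy : ∀ i, 0 < y i)
    (hsum : ∑ i, x i = ∑ i, y i) : (∀ α, renyiH α y ≤ renyiH α x) ↔
      ∀ α, ∑ i, powerEntropy α (x i) ≤ ∑ i, powerEntropy α (y i) := by
  refine ⟨fun h => sum_powerEntropy_le_of_dense (dense_compl_singleton 0) hx hy hsum
    fun α hα => (renyiH_le_iff_sum_powerEntropy_le hx hy hα).mp (h α), fun h α => ?_⟩
  rcases eq_or_ne α 0 with rfl | hα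
  · rw [renyiH_zero_of_pos hx, renyiH_zero_of_pos hy]
  · exact (renyiH_le_iff_sum_powerEntropy_le hx hy hα).mpr (h α)

end PowerEntropies

section Monotones

variable {ι : Type*} [Fintype ι] {x y : ι → ℝ}

theorem IsProbVec.exists_pos (hx : IsProbVec x) : ∃ i, 0 < x i := by
  obtain ⟨i, -, hi⟩ := Finset.exists_lt_of_sum_lt (s := Finset.univ) (f := fun _ => (0 : ℝ))
    (g := x) (by simp [hx.2])
  exact ⟨i, hi⟩

variable [DecidableEq ι]

/-- Approximate trumping: probability vectors arbitrarily `ℓ¹`-close to `x` are trumped by `y`. -/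
def ApproxTrump (x y : ι → ℝ) : Prop :=
  ∀ ε > (0 : ℝ), ∃ w, IsProbVec w ∧ (∑ i, |x i - w i|) ≤ ε ∧ PTrump w y

theorem PTrump.sum_powerEntropy_le (h : PTrump x y) (hx : ∀ i, 0 < x i) (hy : ∀ i, 0 < y i)
    (hsum : ∑ i, x i = ∑ i, y i) (α : ℝ) :
    ∑ i, powerEntropy α (x i) ≤ ∑ i, powerEntropy α (y i) := by
  obtain ⟨k, c, hc, hmaj⟩ := h
  obtain ⟨j, hj⟩ := hc.exists_pos
  obtain ⟨A, B, hAB⟩ := exists_forall_mem_Icc_exp (v := Sum.elim x y) (Sum.forall.mpr ⟨hx, hy⟩)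
  obtain ⟨hxAB, hyAB⟩ := Sum.forall.mp hAB
  rw [← sub_nonneg, ← laplaceOn_hingeGap hsum hxAB hyAB]
  exact laplaceOn_nonneg_of_sum_comp_sub_nonneg ⟨j, Finset.mem_filter.mpr ⟨Finset.mem_univ j, hj⟩⟩
    (fun j => Real.log (c j)) (continuous_hingeGap x y) (hingeGap_eq_zero hsum hxAB hyAB)
    ((pMaj_pvTensor_iff (fun i => (hx i).le) (fun i => (hy i).le) hsum hc.1).mp hmaj) α

theorem ApproxTrump.mem_closure (h : ApproxTrump x y) :
    x ∈ closure {w | IsProbVec w ∧ PTrump w y} := by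
  refine Metric.mem_closure_iff.mpr fun ε hε => ?_
  obtain ⟨w, hw, hxw, hwy⟩ := h (ε / 2) (half_pos hε)
  refine ⟨w, ⟨hw, hwy⟩, (dist_pi_lt_iff hε).mpr fun i => ?_⟩
  rw [Real.dist_eq]
  exact (Finset.single_le_sum (f := fun i => |x i - w i|) (fun _ _ => abs_nonneg _)
    (Finset.mem_univ i)).trans_lt (hxw.trans_lt (half_lt_self hε))

theorem ApproxTrump.sum_powerEntropy_le (h : ApproxTrump x y) (hx : ∀ i, 0 < x i)
    (hy : ∀ i, 0 < y i) (hysum : ∑ i, y i = 1) (α : ℝ) :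
    ∑ i, powerEntropy α (x i) ≤ ∑ i, powerEntropy α (y i) := by
  have hcont : Tendsto (fun w : ι → ℝ => ∑ i, powerEntropy α (w i)) (𝓝 x)
      (𝓝 (∑ i, powerEntropy α (x i))) :=
    tendsto_finsetSum _ fun i _ =>
      (hasDerivAt_powerEntropy α (hx i)).continuousAt.tendsto.comp (continuous_apply i).continuousAt
  have hpos : ∀ᶠ w : ι → ℝ in 𝓝 x, ∀ i, 0 < w i :=
    eventually_all.mpr fun i => (continuous_apply i).continuousAt.eventually_const_lt (hx i)
  refine le_of_tendsto_of_frequently hcont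
    (((mem_closure_iff_frequently.mp h.mem_closure).and_eventually hpos).mono ?_)
  rintro w ⟨⟨hw, hwy⟩, hwpos⟩
  exact hwy.sum_powerEntropy_le hwpos hy (hw.2.trans hysum.symm) α

end Monotones

section Catalysis

variable {ι κ : Type*} [Fintype ι] [Fintype κ]

theorem exists_forall_le_of_frequently_sum_pow_le [Nonempty κ] {p : ι → ℝ} {q : κ → ℝ}
    (hp : ∀ i, 0 ≤ p i) (hq : ∀ j, 0 ≤ q j)
    (h : ∃ᶠ n : ℕ in atTop, ∑ i, p i ^ n ≤ ∑ j, q j ^ n) : ∃ j, ∀ i, p i ≤ q j := by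
  obtain ⟨j, hj⟩ := Finite.exists_max q
  refine ⟨j, fun i => le_of_not_gt fun hlt => h ?_⟩
  have hpi : 0 < p i := (hq j).trans_lt hlt
  have hlim : Tendsto (fun n : ℕ => Fintype.card κ * (q j / p i) ^ n) atTop (𝓝 0) := by
    simpa using (tendsto_pow_atTop_nhds_zero_of_lt_one (div_nonneg (hq j) hpi.le)
      ((div_lt_one hpi).mpr hlt)).const_mul (Fintype.card κ : ℝ)
  filter_upwards [hlim.eventually_lt_const one_pos] with n hn
  rw [div_pow, ← mul_div_assoc, div_lt_one (pow_pos hpi n)] at hn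
  refine not_le.mpr ?_
  calc ∑ j, q j ^ n ≤ ∑ _j : κ, q j ^ n :=
        Finset.sum_le_sum fun l _ => pow_le_pow_left₀ (hq l) (hj l) n
    _ = Fintype.card κ * q j ^ n := by simp
    _ < p i ^ n := hn
    _ ≤ ∑ i, p i ^ n := Finset.single_le_sum (f := fun i => p i ^ n)
        (fun l _ => pow_nonneg (hp l) n) (Finset.mem_univ i)

variable {x y : ι → ℝ}

theorem exists_forall_le_of_sum_powerEntropy_le [Nonempty ι] (hx : ∀ i, 0 < x i)
    (hy : ∀ i, 0 < y i) (h : ∀ α, ∑ i, powerEntropy α (x i) ≤ ∑ i, powerEntropy α (y i)) :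
    ∃ j, ∀ i, x i ≤ y j := by
  refine exists_forall_le_of_frequently_sum_pow_le (fun i => (hx i).le) (fun i => (hy i).le)
    (Eventually.frequently ?_)
  filter_upwards [eventually_gt_atTop 1] with n hn
  have hn' : (1 : ℝ) < n := Nat.one_lt_cast.mpr hn
  simpa only [Real.rpow_natCast] using
    (sum_powerEntropy_le_iff_of_pos (mul_pos (by linarith) (by linarith))).mp (h n)

theorem exists_forall_ge_of_sum_powerEntropy_le [Nonempty ι] (hx : ∀ i, 0 < x i)
    (hy : ∀ i, 0 < y i) (h : ∀ α, ∑ i, powerEntropy α (x i) ≤ ∑ i, powerEntropy α (y i)) :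
    ∃ j, ∀ i, y j ≤ x i := by
  have hinv : ∃ j, ∀ i, (x i)⁻¹ ≤ (y j)⁻¹ := by
    refine exists_forall_le_of_frequently_sum_pow_le (fun i => (inv_pos.mpr (hx i)).le)
      (fun i => (inv_pos.mpr (hy i)).le) (Eventually.frequently ?_)
    filter_upwards [eventually_gt_atTop 0] with n hn
    have hn' : (0 : ℝ) < n := Nat.cast_pos.mpr hn
    have hpow := (sum_powerEntropy_le_iff_of_pos
      (mul_pos_of_neg_of_neg (by linarith) (by linarith))).mp (h (-n))
    simpa only [Real.rpow_neg (hx _).le, Real.rpow_neg (hy _).le, Real.rpow_natCast, inv_pow]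
      using hpow
  exact hinv.imp fun j hj i => (inv_le_inv₀ (hx i) (hy j)).mp (hj i)

theorem pTrump_of_sum_powerEntropy_lt [DecidableEq ι] [Nonempty ι] (hx : ∀ i, 0 < x i)
    (hy : ∀ i, 0 < y i) (hsum : ∑ i, x i = ∑ i, y i) (hmin : ∃ j, ∀ i, y j < x i)
    (hmax : ∃ j, ∀ i, x i < y j)
    (h : ∀ α, ∑ i, powerEntropy α (x i) < ∑ i, powerEntropy α (y i)) : PTrump x y := by
  obtain ⟨iₘ, hiₘ⟩ := Finite.exists_min x
  obtain ⟨iM, hiM⟩ := Finite.exists_max x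
  obtain ⟨jₘ, hjₘ⟩ := Finite.exists_min y
  obtain ⟨jM, hjM⟩ := Finite.exists_max y
  have hyx (i : ι) : y jₘ < x i := hmin.elim fun j hj => (hjₘ j).trans_lt (hj i)
  have hxy (i : ι) : x i < y jM := hmax.elim fun j hj => (hj i).trans_le (hjM j)
  have hIcc {v : ℝ} (hv : v ∈ Icc (y jₘ) (y jM)) :
      v ∈ Icc (Real.exp (Real.log (y jₘ))) (Real.exp (Real.log (y jM))) := by
    rwa [Real.exp_log (hy jₘ), Real.exp_log (hy jM)]
  have hxIcc (i : ι) := hIcc ⟨(hyx i).le, (hxy i).le⟩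
  have hyIcc (i : ι) := hIcc ⟨hjₘ i, hjM i⟩
  obtain ⟨η, N, hconv⟩ := exists_binomial_convolution_nonneg (continuous_hingeGap x y)
    (A := Real.log (y jₘ)) (A' := Real.log (x iₘ)) (B' := Real.log (x iM)) (B := Real.log (y jM))
    (Real.log_lt_log (hy jₘ) ((hyx iₘ).trans (hxy iₘ))) (Real.log_lt_log (hy jₘ) (hyx iₘ))
    (Real.log_lt_log (hx iM) (hxy iM))
    (fun u hu => hingeGap_pos_of_exp_le hsum
      (fun i => ((Real.lt_log_iff_exp_lt (hx iₘ)).mp hu.2).le.trans (hiₘ i))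
      ⟨jₘ, (Real.log_lt_iff_lt_exp (hy jₘ)).mp hu.1⟩)
    (fun u hu => hingeGap_pos_of_le_exp
      (fun i => (hiM i).trans ((Real.log_lt_iff_lt_exp (hx iM)).mp hu.1).le)
      ⟨jM, (Real.lt_log_iff_exp_lt (hy jM)).mp hu.2⟩)
    (fun u hu => (hingeGap_eq_zero hsum hxIcc hyIcc u hu).ge)
    (fun α => by rw [laplaceOn_hingeGap hsum hxIcc hyIcc]; exact sub_pos.mpr (h α))
  exact pTrump_of_binomial_convolution_nonneg (fun i => (hx i).le) (fun i => (hy i).le) hsum hconv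

end Catalysis

section Mixing

variable {ι : Type*} [Fintype ι] {x y : ι → ℝ} {δ : ℝ}

/-- The convex combination of `x` and the uniform vector, with weights `1 - δ` and `δ`. -/
noncomputable def mixUniform (δ : ℝ) (x : ι → ℝ) (i : ι) : ℝ :=
  (1 - δ) * x i + δ * (Fintype.card ι : ℝ)⁻¹

theorem IsProbVec.nonempty (hx : IsProbVec x) : Nonempty ι :=
  not_isEmpty_iff.mp fun _ => by simpa using hx.2

theorem sum_inv_card [Nonempty ι] : ∑ _i : ι, (Fintype.card ι : ℝ)⁻¹ = 1 := by
  simp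

theorem isProbVec_mixUniform (hx : IsProbVec x) (hδ0 : 0 ≤ δ) (hδ1 : δ ≤ 1) :
    IsProbVec (mixUniform δ x) := by
  have := hx.nonempty
  refine ⟨fun i => add_nonneg (mul_nonneg (sub_nonneg.mpr hδ1) (hx.1 i)) (by positivity), ?_⟩
  simp only [mixUniform, Finset.sum_add_distrib, ← Finset.mul_sum, hx.2, sum_inv_card]
  ring

theorem IsProbVec.sum_abs_sub_mixUniform_le (hx : IsProbVec x) (hδ : 0 ≤ δ) :
    ∑ i, |x i - mixUniform δ x i| ≤ 2 * δ := by
  have := hx.nonempty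
  calc ∑ i, |x i - mixUniform δ x i|
      ≤ ∑ i, δ * (x i + (Fintype.card ι : ℝ)⁻¹) := by
        refine Finset.sum_le_sum fun i _ => ?_
        have hdiff : x i - mixUniform δ x i = δ * (x i - (Fintype.card ι : ℝ)⁻¹) := by
          rw [mixUniform]
          ring
        rw [hdiff, abs_mul, abs_of_nonneg hδ]
        gcongr
        exact (abs_sub _ _).trans_eq (by rw [abs_of_nonneg (hx.1 i), abs_of_nonneg (by positivity)])
    _ = 2 * δ := by
        rw [← Finset.mul_sum, Finset.sum_add_distrib, hx.2, sum_inv_card]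
        ring

theorem IsProbVec.sum_powerEntropy_mixUniform_lt (hx : IsProbVec x) (hxpos : ∀ i, 0 < x i)
    (hne : ∃ i, x i ≠ (Fintype.card ι : ℝ)⁻¹) (hδ0 : 0 < δ) (hδ1 : δ < 1) (α : ℝ) :
    ∑ i, powerEntropy α (mixUniform δ x i) < ∑ i, powerEntropy α (x i) := by
  have := hx.nonempty
  set r := (Fintype.card ι : ℝ)⁻¹ with hr
  have hr0 : 0 < r := by positivity
  have hconv := strictConvexOn_powerEntropy α
  have hmean : powerEntropy α r ≤ ∑ i, r * powerEntropy α (x i) := by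
    have h := hconv.convexOn.map_sum_le (t := Finset.univ) (w := fun _ => r) (p := x)
      (fun _ _ => hr0.le) sum_inv_card fun i _ => hxpos i
    simpa only [smul_eq_mul, ← Finset.mul_sum, hx.2, mul_one] using h
  obtain ⟨i, hi⟩ := hne
  calc ∑ i, powerEntropy α (mixUniform δ x i)
      < ∑ i, ((1 - δ) * powerEntropy α (x i) + δ * powerEntropy α r) :=
        Finset.sum_lt_sum (fun i _ => hconv.convexOn.2 (hxpos i) hr0 (by linarith) hδ0.le (by ring))
          ⟨i, Finset.mem_univ i, hconv.2 (hxpos i) hr0 hi (by linarith) hδ0 (by ring)⟩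
    _ = (1 - δ) * ∑ i, powerEntropy α (x i) + δ * (Fintype.card ι * powerEntropy α r) := by
        rw [Finset.sum_add_distrib, ← Finset.mul_sum, Finset.sum_const, Finset.card_univ,
          nsmul_eq_mul]
        ring
    _ ≤ (1 - δ) * ∑ i, powerEntropy α (x i) + δ * ∑ i, powerEntropy α (x i) := by
        gcongr
        rwa [← Finset.mul_sum, hr, ← div_eq_inv_mul, le_div_iff₀' (by positivity)] at hmean
    _ = ∑ i, powerEntropy α (x i) := by ring

theorem IsProbVec.mixUniform_lt (hx : IsProbVec x) (hne : ∃ i, x i ≠ (Fintype.card ι : ℝ)⁻¹)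
    (hδ0 : 0 < δ) (hδ1 : δ ≤ 1) {M : ℝ} (hM : ∀ i, x i ≤ M) (i : ι) :
    mixUniform δ x i < M := by
  have := hx.nonempty
  obtain ⟨j, -, hj⟩ := Finset.exists_pos_of_sum_zero_of_exists_nonzero (s := Finset.univ)
    (fun i => x i - (Fintype.card ι : ℝ)⁻¹)
    (by rw [Finset.sum_sub_distrib, hx.2, sum_inv_card, sub_self])
    (hne.imp fun i hi => ⟨Finset.mem_univ i, sub_ne_zero.mpr hi⟩)
  rw [mixUniform]
  nlinarith [hM i, hM j]

theorem IsProbVec.lt_mixUniform (hx : IsProbVec x) (hne : ∃ i, x i ≠ (Fintype.card ι : ℝ)⁻¹)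
    (hδ0 : 0 < δ) (hδ1 : δ ≤ 1) {m : ℝ} (hm : ∀ i, m ≤ x i) (i : ι) :
    m < mixUniform δ x i := by
  have := hx.nonempty
  obtain ⟨j, -, hj⟩ := Finset.exists_pos_of_sum_zero_of_exists_nonzero (s := Finset.univ)
    (fun i => (Fintype.card ι : ℝ)⁻¹ - x i)
    (by rw [Finset.sum_sub_distrib, hx.2, sum_inv_card, sub_self])
    (hne.imp fun i hi => ⟨Finset.mem_univ i, sub_ne_zero.mpr hi.symm⟩)
  rw [mixUniform]
  nlinarith [hm i, hm j]

variable [DecidableEq ι]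

theorem pTrump_mixUniform (hx : IsProbVec x) (hy : IsProbVec y) (hxpos : ∀ i, 0 < x i)
    (hypos : ∀ i, 0 < y i) (h : ∀ α, ∑ i, powerEntropy α (x i) ≤ ∑ i, powerEntropy α (y i))
    (hne : ∃ i, x i ≠ (Fintype.card ι : ℝ)⁻¹) (hδ0 : 0 < δ) (hδ1 : δ < 1) :
    PTrump (mixUniform δ x) y := by
  have := hx.nonempty
  obtain ⟨jₘ, hjₘ⟩ := exists_forall_ge_of_sum_powerEntropy_le hxpos hypos h
  obtain ⟨jM, hjM⟩ := exists_forall_le_of_sum_powerEntropy_le hxpos hypos h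
  have hlt := hx.lt_mixUniform hne hδ0 hδ1.le hjₘ
  exact pTrump_of_sum_powerEntropy_lt (fun i => (hypos jₘ).trans (hlt i)) hypos
    ((isProbVec_mixUniform hx hδ0.le hδ1.le).2.trans hy.2.symm) ⟨jₘ, hlt⟩
    ⟨jM, hx.mixUniform_lt hne hδ0 hδ1.le hjM⟩
    fun α => (hx.sum_powerEntropy_mixUniform_lt hxpos hne hδ0 hδ1 α).trans_le (h α)

theorem pTrump_const {r : ℝ} (hr : 0 ≤ r) (hy : ∀ i, 0 ≤ y i)
    (hsum : ∑ i, y i = Fintype.card ι * r) : PTrump (fun _ => r) y :=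
  pTrump_of_sum_hingeGap_nonneg (κ := Unit) (fun _ => hr) hy (by simp [hsum]) (fun _ => 0)
    fun u => by simpa [hingeGap] using hinge_const_le hsum u

theorem approxTrump_of_sum_powerEntropy_le (hx : IsProbVec x) (hy : IsProbVec y)
    (hxpos : ∀ i, 0 < x i) (hypos : ∀ i, 0 < y i)
    (h : ∀ α, ∑ i, powerEntropy α (x i) ≤ ∑ i, powerEntropy α (y i)) : ApproxTrump x y := by
  intro ε hε
  by_cases hne : ∃ i, x i ≠ (Fintype.card ι : ℝ)⁻¹
  · obtain ⟨δ, hδ0, hδ⟩ := exists_between (lt_min (half_pos hε) one_pos)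
    obtain ⟨hδε, hδ1⟩ := lt_min_iff.mp hδ
    exact ⟨mixUniform δ x, isProbVec_mixUniform hx hδ0.le hδ1.le,
      (hx.sum_abs_sub_mixUniform_le hδ0.le).trans (by linarith),
      pTrump_mixUniform hx hy hxpos hypos h hne hδ0 hδ1⟩
  · push Not at hne
    have := hx.nonempty
    refine ⟨x, hx, by simpa using hε.le, ?_⟩
    rw [funext hne]
    exact pTrump_const (by positivity) hy.1 (by simp [hy.2])

end Mixing

theorem approx_trumping_iff_renyi_general {ι : Type*} [Fintype ι] [DecidableEq ι] (x y : ι → ℝ)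
    (hx : IsProbVec x) (hy : IsProbVec y)
    (hxpos : ∀ i, 0 < x i) (hypos : ∀ i, 0 < y i) :
    ApproxTrump x y ↔ ∀ α : ℝ, renyiH α y ≤ renyiH α x :=
  Iff.trans ⟨fun h => h.sum_powerEntropy_le hxpos hypos hy.2,
      approxTrump_of_sum_powerEntropy_le hx hy hxpos hypos⟩
    (forall_renyiH_le_iff hxpos hypos (hx.2.trans hy.2.symm)).symm

/-- Brandão et al., Proposition 4 (Supplementary Information): approximate trumping
(allowing an arbitrarily small ℓ₁-error in the initial state) is equivalent to
monotonicity of all Rényi entropies. -/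
theorem approx_trumping_iff_renyi {d : ℕ} (x y : Fin d → ℝ)
    (hx : IsProbVec x) (hy : IsProbVec y)
    (hxpos : ∀ i, 0 < x i) (hypos : ∀ i, 0 < y i) :
    (∀ ε > (0 : ℝ), ∃ xε : Fin d → ℝ, IsProbVec xε ∧ (∑ i, |x i - xε i|) ≤ ε ∧
        ∃ (k : ℕ) (c : Fin k → ℝ), IsProbVec c ∧ PMaj (pvTensor xε c) (pvTensor y c)) ↔
      (∀ α : ℝ, renyiH α y ≤ renyiH α x) :=
  approx_trumping_iff_renyi_general x y hx hy hxpos hypos
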